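/- Let (𝓑₁, 𝓑₀) be a Rota-Baxter operator on a crossed module of groups (H, G, t, Φ), and define R₁ and R₀ as follows: R₀(a, b) = (Ad_{𝓑₀(a)}(b), Ad_{(𝓑₀(d)⁻¹)·d⁻¹}(a)) with d = Ad_{𝓑₀(a)}(b) and Ad_g(x) = g·x·g⁻¹ in G; R₁(m, n) = (Ad_{𝓑(m)}(n), Ad_{(𝓑(c)⁻¹)·_Φ c⁻¹}(m)) with c = Ad_{𝓑(m)}(n), where Ad is conjugation in the semidirect product group (G ⋉_Φ H, ·_Φ) with (a, p) ·_Φ (b, q) = (a·b, p·Φ(a)(q)), and 𝓑(a, p) = (𝓑₀(a), Φ(𝓑₀(a))(𝓑₁(Φ(𝓑₀(a)⁻¹·a⁻¹)(p)))). Define the target map 𝔱(a, p) = t(p)·a. Then (𝔱 × 𝔱) ∘ R₁ = R₀ ∘ (𝔱 × 𝔱); explicitly, if R₁((a, p), (b, q)) = ((a₁, p₁), (b₁, q₁)) then (t(p₁)·a₁, t(q₁)·b₁) = R₀(t(p)·a, t(q)·b). -/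

import Mathlib

/-- A crossed module of groups. -/
structure IsCrossedModule {H G : Type*} [Group H] [Group G]
    (t : H → G) (Φ : G → H → H) : Prop where
  t_mul : ∀ p q : H, t (p * q) = t p * t q
  Φ_mul_hom : ∀ (a : G) (p q : H), Φ a (p * q) = Φ a p * Φ a q
  Φ_bij : ∀ a : G, Function.Bijective (Φ a)
  Φ_one : ∀ p : H, Φ 1 p = p
  Φ_mul : ∀ (a b : G) (p : H), Φ (a * b) p = Φ a (Φ b p)
  peiffer : ∀ p q : H, Φ (t p) q = p * q * p⁻¹
  equivar : ∀ (a : G) (p : H), t (Φ a p) = a * t p * a⁻¹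

/-- Rota-Baxter operator on a group. -/
def IsRotaBaxter {G : Type*} [Group G] (B : G → G) : Prop :=
  ∀ a b : G, B a * B b = B (a * B a * b * (B a)⁻¹)

/-- Rota-Baxter operator on a crossed module of groups. -/
structure IsCMRotaBaxter {H G : Type*} [Group H] [Group G]
    (t : H → G) (Φ : G → H → H) (B₁ : H → H) (B₀ : G → G) : Prop where
  rb₁ : IsRotaBaxter B₁
  rb₀ : IsRotaBaxter B₀
  t_comm : ∀ p : H, t (B₁ p) = B₀ (t p)
  compat : ∀ (a : G) (p : H),
    Φ (B₀ a) (B₁ p) = B₁ (Φ (a * B₀ a) (p * B₁ p) * (Φ (B₀ a) (B₁ p))⁻¹)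

/-- The semidirect product multiplication `(a,p)·_Φ(b,q) = (a·b, p·Φ(a)q)` on `G × H`. -/
def sdpMul {H G : Type*} [Group H] [Group G] (Φ : G → H → H) (m n : G × H) : G × H :=
  (m.1 * n.1, m.2 * Φ m.1 n.2)

/-- The inverse for `sdpMul`. -/
def sdpInv {H G : Type*} [Group H] [Group G] (Φ : G → H → H) (m : G × H) : G × H :=
  (m.1⁻¹, Φ m.1⁻¹ m.2⁻¹)

/-- The operator `𝓑(a,p) = (B₀(a), Φ(B₀(a))(B₁(Φ(B₀(a)⁻¹·a⁻¹)(p))))` on `G ⋉_Φ H`. -/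
def Bcal {H G : Type*} [Group H] [Group G] (Φ : G → H → H)
    (B₁ : H → H) (B₀ : G → G) (m : G × H) : G × H :=
  (B₀ m.1, Φ (B₀ m.1) (B₁ (Φ ((B₀ m.1)⁻¹ * m.1⁻¹) m.2)))

/-- The Yang-Baxter map `R(m,n) = (Ad_{B(m)}(n), Ad_{B(c)⁻¹·c⁻¹}(m))`, `c = Ad_{B(m)}(n)`,
written for an abstract multiplication `mul` and inversion `inv`. -/
def Rgen {X : Type*} (mul : X → X → X) (inv : X → X) (B : X → X) (z : X × X) : X × X :=
  let c := mul (mul (B z.1) z.2) (inv (B z.1))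
  let d := mul (inv (B c)) (inv c)
  (c, mul (mul d z.1) (inv d))

section TargetMap

variable {H G : Type*} [Group H] [Group G] {t : H → G} {Φ : G → H → H}

theorem IsCrossedModule.t_inv (h : IsCrossedModule t Φ) (p : H) : t p⁻¹ = (t p)⁻¹ :=
  map_inv (MonoidHom.mk' t h.t_mul) p

/-- The target map is multiplicative. -/
theorem IsCrossedModule.target_sdpMul (h : IsCrossedModule t Φ) (m n : G × H) :
    t (sdpMul Φ m n).2 * (sdpMul Φ m n).1 = (t m.2 * m.1) * (t n.2 * n.1) := by
  simp only [sdpMul, h.t_mul, h.equivar]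
  group

/-- The target map commutes with inversion. -/
theorem IsCrossedModule.target_sdpInv (h : IsCrossedModule t Φ) (m : G × H) :
    t (sdpInv Φ m).2 * (sdpInv Φ m).1 = (t m.2 * m.1)⁻¹ := by
  simp only [sdpInv, h.equivar, h.t_inv]
  group

/-- The target map intertwines `𝓑` and `B₀`. -/
theorem IsCMRotaBaxter.target_Bcal {B₁ : H → H} {B₀ : G → G}
    (hrb : IsCMRotaBaxter t Φ B₁ B₀) (h : IsCrossedModule t Φ) (m : G × H) :
    t (Bcal Φ B₁ B₀ m).2 * (Bcal Φ B₁ B₀ m).1 = B₀ (t m.2 * m.1) := by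
  simp only [Bcal, h.equivar, hrb.t_comm, inv_mul_cancel_right]
  rw [hrb.rb₀]
  congr 1
  group

end TargetMap

theorem stmt10 {H G : Type*} [Group H] [Group G] (t : H → G) (Φ : G → H → H)
    (B₁ : H → H) (B₀ : G → G) (hcm : IsCrossedModule t Φ)
    (hrb : IsCMRotaBaxter t Φ B₁ B₀) :
    ∀ z : (G × H) × (G × H),
      (t (Rgen (sdpMul Φ) (sdpInv Φ) (Bcal Φ B₁ B₀) z).1.2
          * (Rgen (sdpMul Φ) (sdpInv Φ) (Bcal Φ B₁ B₀) z).1.1,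
       t (Rgen (sdpMul Φ) (sdpInv Φ) (Bcal Φ B₁ B₀) z).2.2
          * (Rgen (sdpMul Φ) (sdpInv Φ) (Bcal Φ B₁ B₀) z).2.1)
        = Rgen (fun a b : G => a * b) (fun a => a⁻¹) B₀
            (t z.1.2 * z.1.1, t z.2.2 * z.2.1) := by
  intro z
  simp only [Rgen, hcm.target_sdpMul, hcm.target_sdpInv, hrb.target_Bcal hcm]
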